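/- arXiv:1707.09501 — 8 statements merged into one kernel-verified Lean document; each statement's English description precedes it below -/
import Mathlib

section
/- Let M, N be nonnegative integers, let a_0 < a_1 < ... < a_N be real numbers, and let K_N = K_N(a_0,...,a_N) be the union of the N+1 horizontal lines L_j = {(x_1,x_2) ∈ ℝ² : x_2 = a_j}. Let {s_{m,n}}_{0≤m≤M, 0≤n≤N} be real numbers, and for each m ∈ {0,...,M} let (s_m(0),...,s_m(N)) be the unique real solution of the linear system Σ_{j=0}^N a_j^n s_m(j) = s_{m,n} (n = 0,...,N), whose coefficient matrix is the invertible Vandermonde matrix of a_0,...,a_N. Then there exists a nonnegative Borel measure μ on ℝ² with supp μ ⊆ K_N and ∫_{ℝ²} x_1^m x_2^n dμ = s_{m,n} for all 0≤m≤M, 0≤n≤N, if and only if for each j ∈ {0,...,N} there exists a nonnegative Borel measure σ_j on ℝ with ∫_ℝ x^m dσ_j = s_m(j) for all m = 0,...,M. -/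
open MeasureTheory

/-!
A measure on a finite union of lines `X × {a j}` is the same thing as a family of measures `σ j` on
`X`, one per line: cut it up along the disjoint lines, or add the pieces. For such a measure
`∫ f(x) g(y) = ∑ j, g (a j) * ∫ f dσ j`, so prescribing its moments against test functions `g n`
prescribes a linear system for the numbers `∫ f dσ j`. When the columns `(g n (a j))ₙ` of that
system are linearly independent, which for monomials is the nonvanishing of the Vandermonde
determinant, its only solution is the given one.
-/

variable {X Y κ : Type*} [MeasurableSpace X] [MeasurableSpace Y] [Fintype κ]

/-- The measure on `X × Y` whose part on the line `X × {a j}` is a copy of `σ j`. Lines `a i = a j`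
with `i ≠ j` are allowed to coincide, in which case their measures add up. -/
noncomputable def layeredMeasure (a : κ → Y) (σ : κ → Measure X) : Measure (X × Y) :=
  ∑ j, (σ j).map (·, a j)

section LayeredMeasure

variable [MeasurableSingletonClass Y] {a : κ → Y}

theorem layeredMeasure_compl_iUnion_eq_zero (a : κ → Y) (σ : κ → Measure X) :
    layeredMeasure a σ (⋃ j, {p : X × Y | p.2 = a j})ᶜ = 0 := by
  simp only [layeredMeasure, Measure.finsetSum_apply]
  refine Finset.sum_eq_zero fun j _ ↦ ?_
  rw [(measurableEmbedding_prod_mk_right (a j)).map_apply]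
  convert measure_empty (μ := σ j)
  ext x
  simp

theorem layeredMeasure_comap_eq_self (ha : Function.Injective a) {μ : Measure (X × Y)}
    (hμ : μ (⋃ j, {p : X × Y | p.2 = a j})ᶜ = 0) :
    layeredMeasure a (fun j ↦ μ.comap (·, a j)) = μ := by
  have range_eq (j : κ) : Set.range (fun x : X ↦ (x, a j)) = {p | p.2 = a j} := by
    ext ⟨x, y⟩
    simp [eq_comm]
  have pairwise_disjoint :
      Pairwise (Function.onFun Disjoint fun j ↦ {p : X × Y | p.2 = a j}) := fun _ _ hij ↦
    Set.disjoint_left.2 fun _ hi hj ↦ hij (ha (hi.symm.trans hj))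
  have measurableSet_line (j : κ) : MeasurableSet {p : X × Y | p.2 = a j} :=
    measurable_snd (measurableSet_singleton (a j))
  calc
    layeredMeasure a (fun j ↦ μ.comap (·, a j)) = ∑ j, μ.restrict {p | p.2 = a j} := by
      simp only [layeredMeasure, (measurableEmbedding_prod_mk_right _).map_comap, range_eq]
    _ = μ.restrict (⋃ j, {p | p.2 = a j}) := by
      rw [Measure.restrict_iUnion pairwise_disjoint measurableSet_line, Measure.sum_fintype]
    _ = μ := Measure.restrict_eq_self_of_ae_mem (mem_ae_iff.2 hμ)

variable {E : Type*} [NormedAddCommGroup E] {σ : κ → Measure X} {F : X × Y → E}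

theorem integrable_layeredMeasure_iff :
    Integrable F (layeredMeasure a σ) ↔ ∀ j, Integrable (fun x ↦ F (x, a j)) (σ j) := by
  simp only [layeredMeasure, integrable_finsetSum_measure, Finset.mem_univ, forall_const,
    (measurableEmbedding_prod_mk_right _).integrable_map_iff, Function.comp_def]

theorem integral_layeredMeasure [NormedSpace ℝ E] (hF : Integrable F (layeredMeasure a σ)) :
    ∫ p, F p ∂layeredMeasure a σ = ∑ j, ∫ x, F (x, a j) ∂σ j := by
  rw [layeredMeasure] at hF ⊢
  rw [integral_finsetSum_measure (integrable_finsetSum_measure.1 hF)]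
  simp only [(measurableEmbedding_prod_mk_right _).integral_map]

end LayeredMeasure

theorem forall_sum_mul_eq_iff_of_linearIndependent {R ν : Type*} [CommRing R] {v : κ → ν → R}
    (hv : LinearIndependent R v) {b c : κ → R} :
    (∀ n, ∑ j, v j n * b j = ∑ j, v j n * c j) ↔ b = c := by
  refine ⟨fun h ↦ hv.fintypeLinearCombination_injective ?_, fun h ↦ by simp [h]⟩
  ext n
  simpa [Fintype.linearCombination_apply, mul_comm] using h n

theorem linearIndependent_pow_of_injective {R : Type*} [CommRing R] [IsDomain R] {N : ℕ}
    {a : Fin N → R} (ha : Function.Injective a) :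
    LinearIndependent R fun (j n : Fin N) ↦ a j ^ (n : ℕ) :=
  Matrix.linearIndependent_rows_of_det_ne_zero (Matrix.det_vandermonde_ne_zero_iff.2 ha)

section ProductMoments

variable {ν 𝕜 : Type*} [RCLike 𝕜] [MeasurableSingletonClass Y] {a : κ → Y} {g : ν → Y → 𝕜}

theorem forall_integrable_mul_layeredMeasure_iff (hg : ∀ j, ∃ n, g n (a j) ≠ 0)
    {σ : κ → Measure X} {f : X → 𝕜} :
    (∀ n, Integrable (fun p ↦ f p.1 * g n p.2) (layeredMeasure a σ)) ↔
      ∀ j, Integrable f (σ j) := by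
  simp only [integrable_layeredMeasure_iff]
  refine ⟨fun h j ↦ ?_, fun h n j ↦ (h j).mul_const _⟩
  obtain ⟨n, hn⟩ := hg j
  exact (integrable_mul_const_iff hn.isUnit f).1 (h n j)

theorem integral_mul_layeredMeasure {σ : κ → Measure X} {f : X → 𝕜} {h : Y → 𝕜}
    (hf : Integrable (fun p ↦ f p.1 * h p.2) (layeredMeasure a σ)) :
    ∫ p, f p.1 * h p.2 ∂layeredMeasure a σ = ∑ j, h (a j) * ∫ x, f x ∂σ j := by
  simp only [integral_layeredMeasure hf, integral_mul_const, mul_comm]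

theorem layeredMeasure_moments_iff (hg : LinearIndependent 𝕜 fun j n ↦ g n (a j))
    {σ : κ → Measure X} {f : X → 𝕜} {s : ν → 𝕜} {c : κ → 𝕜}
    (hc : ∀ n, ∑ j, g n (a j) * c j = s n) :
    (∀ n, Integrable (fun p ↦ f p.1 * g n p.2) (layeredMeasure a σ) ∧
        ∫ p, f p.1 * g n p.2 ∂layeredMeasure a σ = s n) ↔
      ∀ j, Integrable f (σ j) ∧ ∫ x, f x ∂σ j = c j := by
  have exists_ne_zero (j : κ) : ∃ n, g n (a j) ≠ 0 := Function.ne_iff.1 (hg.ne_zero j)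
  rw [forall_and, forall_and, ← forall_integrable_mul_layeredMeasure_iff exists_ne_zero]
  refine and_congr_right fun hint ↦ ?_
  simp only [integral_mul_layeredMeasure (hint _), ← hc]
  exact (forall_sum_mul_eq_iff_of_linearIndependent hg).trans funext_iff

theorem truncated_KN_moment_problem_solvable_iff_general {ι : Type*}
    (hg : LinearIndependent 𝕜 fun j n ↦ g n (a j)) (f : ι → X → 𝕜)
    {s : ι → ν → 𝕜} {c : ι → κ → 𝕜} (hc : ∀ m n, ∑ j, g n (a j) * c m j = s m n) :
    (∃ μ : Measure (X × Y), μ (⋃ j, {p : X × Y | p.2 = a j})ᶜ = 0 ∧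
      ∀ m n, Integrable (fun p ↦ f m p.1 * g n p.2) μ ∧ ∫ p, f m p.1 * g n p.2 ∂μ = s m n) ↔
    ∀ j, ∃ σ : Measure X, ∀ m, Integrable (f m) σ ∧ ∫ x, f m x ∂σ = c m j := by
  have ha : Function.Injective a := .of_comp (f := fun y n ↦ g n y) hg.injective
  constructor
  · rintro ⟨μ, hμ, hmoments⟩ j
    rw [← layeredMeasure_comap_eq_self ha hμ] at hmoments
    exact ⟨_, fun m ↦ (layeredMeasure_moments_iff hg (hc m)).1 (hmoments m) j⟩
  · intro hσ
    choose σ hσ using hσ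
    exact ⟨layeredMeasure a σ, layeredMeasure_compl_iUnion_eq_zero a σ, fun m ↦
      (layeredMeasure_moments_iff hg (hc m)).2 fun j ↦ hσ j m⟩

end ProductMoments

/-- Proposition 2.1: the truncated `K_N(a_0,...,a_N)`-moment problem (support on the
union of the horizontal lines `x_2 = a_j`) is solvable iff each of the associated
truncated Hamburger moment problems, whose moments `s_m(j)` solve the Vandermonde
linear system `∑_j a_j^n s_m(j) = s_{m,n}`, is solvable. -/
theorem truncated_KN_moment_problem_solvable_iff
    (M N : ℕ) (a : Fin (N + 1) → ℝ) (ha : StrictMono a)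
    (s : Fin (M + 1) → Fin (N + 1) → ℝ) (sj : Fin (M + 1) → Fin (N + 1) → ℝ)
    (hsj : ∀ (m : Fin (M + 1)) (n : Fin (N + 1)),
      ∑ j, a j ^ (n : ℕ) * sj m j = s m n) :
    (∃ μ : Measure (ℝ × ℝ),
      μ (⋃ j, {p : ℝ × ℝ | p.2 = a j})ᶜ = 0 ∧
      ∀ (m : Fin (M + 1)) (n : Fin (N + 1)),
        Integrable (fun p : ℝ × ℝ => p.1 ^ (m : ℕ) * p.2 ^ (n : ℕ)) μ ∧
        ∫ p : ℝ × ℝ, p.1 ^ (m : ℕ) * p.2 ^ (n : ℕ) ∂μ = s m n)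
    ↔ ∀ j : Fin (N + 1), ∃ σ : Measure ℝ,
        ∀ m : Fin (M + 1),
          Integrable (fun x : ℝ => x ^ (m : ℕ)) σ ∧
          ∫ x : ℝ, x ^ (m : ℕ) ∂σ = sj m j :=
  truncated_KN_moment_problem_solvable_iff_general (g := fun (n : Fin (N + 1)) y ↦ y ^ (n : ℕ))
    (linearIndependent_pow_of_injective ha.injective) (fun (m : Fin (M + 1)) x ↦ x ^ (m : ℕ)) hsj
end

section
/- Let M, N be nonnegative integers, let a_0 < a_1 < ... < a_N be real numbers, and let K_N be the union of the horizontal lines L_j = {(x_1,x_2) ∈ ℝ² : x_2 = a_j}, j = 0,...,N. Suppose μ is a nonnegative Borel measure on ℝ² with supp μ ⊆ K_N such that the monomials x_1^m x_2^n are μ-integrable for 0≤m≤M, 0≤n≤N, and set s_{m,n} = ∫_{ℝ²} x_1^m x_2^n dμ. For each j, let σ_j be the measure on ℝ obtained by restricting μ to the line L_j and identifying L_j with ℝ via (x_1, a_j) ↦ x_1. Then for every m ∈ {0,...,M} and n ∈ {0,...,N}, s_{m,n} = Σ_{j=0}^N a_j^n ∫_ℝ x^m dσ_j; in particular, the numbers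 s_m(j) := ∫_ℝ x^m dσ_j are the unique solution of the Vandermonde linear system Σ_{j=0}^N a_j^n s_m(j) = s_{m,n} (n = 0,...,N). -/
open MeasureTheory

section Slice

variable {α β : Type*} [MeasurableSpace α] [MeasurableSpace β]

/-- The measure on `α` obtained by restricting a measure on `α × β` to the slice `α × {b}` and
identifying this slice with `α`; for `α = β = ℝ` it is the restriction to a horizontal line. -/
noncomputable def sliceMeasure (μ : Measure (α × β)) (b : β) : Measure α :=
  (μ.restrict {p | p.2 = b}).map Prod.fst

variable [MeasurableSingletonClass β]

theorem measurableSet_setOf_snd_eq (b : β) : MeasurableSet {p : α × β | p.2 = b} :=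
  measurable_snd (measurableSet_singleton b)

theorem map_prodMk_sliceMeasure (μ : Measure (α × β)) (b : β) :
    (sliceMeasure μ b).map (·, b) = μ.restrict {p | p.2 = b} := by
  have h_id : (fun p : α × β => (p.1, b)) =ᵐ[μ.restrict {p | p.2 = b}] id :=
    (ae_restrict_mem (measurableSet_setOf_snd_eq b)).mono fun p hp => Prod.ext rfl hp.symm
  calc (sliceMeasure μ b).map (·, b)
      = (μ.restrict {p | p.2 = b}).map fun p => (p.1, b) :=
        Measure.map_map measurable_prodMk_right measurable_fst
    _ = μ.restrict {p | p.2 = b} := by rw [Measure.map_congr h_id, Measure.map_id]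

variable {E : Type*} [NormedAddCommGroup E] [NormedSpace ℝ E]

theorem integral_sliceMeasure (μ : Measure (α × β)) (b : β) (f : α × β → E) :
    ∫ x, f (x, b) ∂sliceMeasure μ b = ∫ p in {p | p.2 = b}, f p ∂μ := by
  rw [← map_prodMk_sliceMeasure, (measurableEmbedding_prod_mk_right b).integral_map]

theorem hasSum_integral_sliceMeasure {ι : Type*} [Countable ι] {a : ι → β}
    (ha : Function.Injective a) {μ : Measure (α × β)}
    (hμ : μ (⋃ j, {p | p.2 = a j})ᶜ = 0) {f : α × β → E} (hf : Integrable f μ) :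
    HasSum (fun j => ∫ x, f (x, a j) ∂sliceMeasure μ (a j)) (∫ p, f p ∂μ) := by
  have h_disj : Pairwise (Function.onFun Disjoint fun j => {p : α × β | p.2 = a j}) :=
    fun i j hij => Set.disjoint_left.2 fun _ hi hj => hij (ha (hi.symm.trans hj))
  have h_restrict : μ.restrict (⋃ j, {p | p.2 = a j}) = μ :=
    Measure.restrict_eq_self_of_ae_mem (mem_ae_iff.2 hμ)
  simpa only [integral_sliceMeasure, h_restrict] using
    hasSum_integral_iUnion (fun j => measurableSet_setOf_snd_eq (a j)) h_disj hf.integrableOn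

end Slice

theorem moments_of_line_restrictions_solve_vandermonde_system_general
    {ι : Type*} [Countable ι] {a : ι → ℝ} (ha : Function.Injective a) {μ : Measure (ℝ × ℝ)}
    (hμ : μ (⋃ j, {p : ℝ × ℝ | p.2 = a j})ᶜ = 0) {m n : ℕ}
    (hint : Integrable (fun p : ℝ × ℝ => p.1 ^ m * p.2 ^ n) μ) :
    HasSum (fun j => a j ^ n * ∫ x, x ^ m ∂sliceMeasure μ (a j))
      (∫ p : ℝ × ℝ, p.1 ^ m * p.2 ^ n ∂μ) := by
  simpa only [integral_mul_const, mul_comm] using hasSum_integral_sliceMeasure ha hμ hint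

/-- Necessity direction of Proposition 2.1: if `μ` solves the truncated
`K_N(a_0,...,a_N)`-moment problem, then the moments of the restrictions of `μ`
to the lines `x_2 = a_j` (identified with `ℝ` via `(x_1, a_j) ↦ x_1`) solve the
Vandermonde linear system `∑_j a_j^n ∫ x^m dσ_j = s_{m,n}`. -/
theorem moments_of_line_restrictions_solve_vandermonde_system
    (M N : ℕ) (a : Fin (N + 1) → ℝ) (ha : StrictMono a)
    (μ : Measure (ℝ × ℝ))
    (hsupp : μ (⋃ j, {p : ℝ × ℝ | p.2 = a j})ᶜ = 0)
    (hint : ∀ (m : Fin (M + 1)) (n : Fin (N + 1)),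
      Integrable (fun p : ℝ × ℝ => p.1 ^ (m : ℕ) * p.2 ^ (n : ℕ)) μ)
    (s : Fin (M + 1) → Fin (N + 1) → ℝ)
    (hs : ∀ (m : Fin (M + 1)) (n : Fin (N + 1)),
      s m n = ∫ p : ℝ × ℝ, p.1 ^ (m : ℕ) * p.2 ^ (n : ℕ) ∂μ)
    (σ : Fin (N + 1) → Measure ℝ)
    (hσ : ∀ j, σ j = Measure.map Prod.fst (μ.restrict {p : ℝ × ℝ | p.2 = a j})) :
    ∀ (m : Fin (M + 1)) (n : Fin (N + 1)),
      s m n = ∑ j, a j ^ (n : ℕ) * ∫ x : ℝ, x ^ (m : ℕ) ∂(σ j) := by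
  obtain rfl : σ = fun j => sliceMeasure μ (a j) := funext hσ
  exact fun m n => (hs m n).trans <|
    (moments_of_line_restrictions_solve_vandermonde_system_general ha.injective hsupp
      (hint m n)).unique (hasSum_fintype _)
end

section
/- Let s_{0,0}, s_{0,1}, s_{1,0}, s_{1,1} be real numbers. There exists a nonnegative Borel measure μ on ℝ² such that x_1^m x_2^n is μ-integrable and ∫_{ℝ²} x_1^m x_2^n dμ = s_{m,n} for all m, n ∈ {0,1}, if and only if either (i) s_{0,0} = s_{0,1} = s_{1,0} = s_{1,1} = 0, or (ii) s_{0,0} > 0. -/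
open MeasureTheory

/-!
The zeroth moment is the mass of `μ`, so it is positive unless `μ = 0`. Conversely, a measure of
prescribed positive mass and mean still has a free covariance: two equal atoms at `x ± (1, u)`
have mean `x` and covariance `u`, for any real `u`.
-/

/-- `μ` solves the truncated two-dimensional moment problem with rectangular data
`s m n`, `m ≤ M`, `n ≤ N`. Integrability is required, so that no moment is a junk value. -/
def SolvesMomentProblem (M N : ℕ) (s : ℕ → ℕ → ℝ) (μ : Measure (ℝ × ℝ)) : Prop :=
  ∀ m ≤ M, ∀ n ≤ N, Integrable (fun p : ℝ × ℝ => p.1 ^ m * p.2 ^ n) μ ∧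
    ∫ p : ℝ × ℝ, p.1 ^ m * p.2 ^ n ∂μ = s m n

open scoped NNReal

section Necessity

variable {M N : ℕ} {s : ℕ → ℕ → ℝ} {μ : Measure (ℝ × ℝ)}

theorem SolvesMomentProblem.isFiniteMeasure (h : SolvesMomentProblem M N s μ) :
    IsFiniteMeasure μ :=
  (integrable_const_iff_isFiniteMeasure one_ne_zero).1 <| by
    simpa using (h 0 M.zero_le 0 N.zero_le).1

theorem SolvesMomentProblem.measureReal_univ_eq (h : SolvesMomentProblem M N s μ) :
    μ.real Set.univ = s 0 0 := by
  simpa using (h 0 M.zero_le 0 N.zero_le).2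

theorem solvesMomentProblem_zero_iff :
    SolvesMomentProblem M N s 0 ↔ ∀ m ≤ M, ∀ n ≤ N, s m n = 0 := by
  simp only [SolvesMomentProblem, integrable_zero_measure, integral_zero_measure, true_and,
    eq_comm]

theorem SolvesMomentProblem.moments_eq_zero_or_pos (h : SolvesMomentProblem M N s μ) :
    (∀ m ≤ M, ∀ n ≤ N, s m n = 0) ∨ 0 < s 0 0 := by
  have := h.isFiniteMeasure
  rcases eq_zero_or_neZero μ with rfl | _
  · exact .inl (solvesMomentProblem_zero_iff.1 h)
  · exact .inr (h.measureReal_univ_eq ▸ measureReal_univ_pos)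

end Necessity

section SymmetricPair

variable {E F : Type*} [MeasurableSpace E] [AddGroup E] [NormedAddCommGroup F]

/-- The measure of total mass `c` with two equal atoms placed symmetrically about `x`, at `x + v`
and `x - v`: its mean is `x`, while `v` is free to prescribe the covariance. -/
noncomputable def symmetricPair (c : ℝ≥0) (x v : E) : Measure E :=
  (c / 2) • (Measure.dirac (x + v) + Measure.dirac (x - v))

variable [MeasurableSingletonClass E]

theorem integrable_symmetricPair (c : ℝ≥0) (x v : E) (f : E → F) :
    Integrable f (symmetricPair c x v) :=
  ((integrable_dirac enorm_lt_top).add_measure (integrable_dirac enorm_lt_top)).smul_measure_nnreal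

theorem integral_symmetricPair [NormedSpace ℝ F] [CompleteSpace F] (c : ℝ≥0) (x v : E)
    (f : E → F) :
    ∫ y, f y ∂symmetricPair c x v = (c / 2) • (f (x + v) + f (x - v)) := by
  rw [symmetricPair, integral_smul_nnreal_measure,
    integral_add_measure (integrable_dirac enorm_lt_top) (integrable_dirac enorm_lt_top),
    integral_dirac, integral_dirac]

end SymmetricPair

section Sufficiency

variable {s : ℕ → ℕ → ℝ}

theorem solvesMomentProblem_symmetricPair {c : ℝ≥0} {x v : ℝ × ℝ} (h00 : s 0 0 = c)
    (h01 : s 0 1 = c * x.2) (h10 : s 1 0 = c * x.1)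
    (h11 : s 1 1 = c * (x.1 * x.2 + v.1 * v.2)) :
    SolvesMomentProblem 1 1 s (symmetricPair c x v) := by
  refine fun m hm n hn => ⟨integrable_symmetricPair c x v _, ?_⟩
  simp only [integral_symmetricPair, NNReal.smul_def, NNReal.coe_div, NNReal.coe_ofNat,
    smul_eq_mul, Prod.fst_add, Prod.snd_add, Prod.fst_sub, Prod.snd_sub]
  interval_cases m <;> interval_cases n <;> simp only [h00, h01, h10, h11] <;> ring

theorem exists_solvesMomentProblem_of_pos (hs : 0 < s 0 0) :
    ∃ μ, SolvesMomentProblem 1 1 s μ := by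
  have hs' : s 0 0 ≠ 0 := hs.ne'
  let mean : ℝ × ℝ := (s 1 0 / s 0 0, s 0 1 / s 0 0)
  let covariance : ℝ := s 1 1 / s 0 0 - mean.1 * mean.2
  refine ⟨symmetricPair ⟨s 0 0, hs.le⟩ mean (1, covariance), ?_⟩
  apply solvesMomentProblem_symmetricPair
  · rfl
  · exact (mul_div_cancel₀ (s 0 1) hs').symm
  · exact (mul_div_cancel₀ (s 1 0) hs').symm
  · calc s 1 1 = s 0 0 * (s 1 1 / s 0 0) := (mul_div_cancel₀ (s 1 1) hs').symm
      _ = s 0 0 * (mean.1 * mean.2 + 1 * covariance) := by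
        rw [one_mul, add_sub_cancel]

end Sufficiency

/-- Theorem 2.1: the truncated two-dimensional moment problem with `M = N = 1` is
solvable iff either all four moments vanish, or `s_{0,0} > 0`. -/
theorem truncated_moment_problem_M1_N1_solvable_iff (s : ℕ → ℕ → ℝ) :
    (∃ μ : Measure (ℝ × ℝ), ∀ m ≤ 1, ∀ n ≤ 1,
        Integrable (fun p : ℝ × ℝ => p.1 ^ m * p.2 ^ n) μ ∧
        ∫ p : ℝ × ℝ, p.1 ^ m * p.2 ^ n ∂μ = s m n)
    ↔ ((s 0 0 = 0 ∧ s 0 1 = 0 ∧ s 1 0 = 0 ∧ s 1 1 = 0) ∨ 0 < s 0 0) := by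
  have vanish_iff : (∀ m ≤ 1, ∀ n ≤ 1, s m n = 0) ↔
      s 0 0 = 0 ∧ s 0 1 = 0 ∧ s 1 0 = 0 ∧ s 1 1 = 0 := by
    simp [Nat.le_one_iff_eq_zero_or_eq_one, and_assoc]
  rw [← vanish_iff]
  constructor
  · rintro ⟨μ, hμ⟩
    exact SolvesMomentProblem.moments_eq_zero_or_pos hμ
  · rintro (hzero | hpos)
    · exact ⟨0, solvesMomentProblem_zero_iff.2 hzero⟩
    · exact exists_solvesMomentProblem_of_pos hpos
end

section
/- Let s_{0,0}, s_{0,1}, s_{1,0}, s_{1,1} be real numbers with s_{0,0} > 0, and let a_0, a_1 be any real numbers with a_0 < s_{0,1}/s_{0,0} < a_1. Then there exists a nonnegative Borel measure μ on ℝ², supported in the union of the two horizontal lines {x_2 = a_0} and {x_2 = a_1}, such that ∫_{ℝ²} x_1^m x_2^n dμ = s_{m,n} for all m, n ∈ {0,1}. -/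
/-!
Place a single atom on each of the two lines. Its mass and its first moment in `x₁` may be chosen
independently, as long as the mass is positive. For `m = 0, 1` the moments of order `m` in `x₁` on
the two lines must have sum `s m 0` and sum weighted by `a0`, `a1` equal to `s m 1`; this linear
system has determinant `a1 - a0`, hence a unique solution. For `m = 0` the solution is positive
exactly because the barycentre `s 0 1 / s 0 0` lies strictly between `a0` and `a1`.
-/

open MeasureTheory

section FiberAtoms

variable {ι β : Type*} [MeasurableSpace β]

/-- The atomic measure on `ℝ × β` carrying, in the fiber over each `a i`, one atom of mass `t 0 i`
and first moment `t 1 i`. The other `t m` are ignored, and the encoding is meaningful only if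
`t 0 i > 0`: negative masses are truncated to `0`. -/
noncomputable def fiberAtoms (a : ι → β) (t : ℕ → ι → ℝ) : Measure (ℝ × β) :=
  Measure.sum fun i => ENNReal.ofReal (t 0 i) • Measure.dirac (t 1 i / t 0 i, a i)

variable [MeasurableSingletonClass β] (a : ι → β) (t : ℕ → ι → ℝ)

lemma fiberAtoms_compl_preimage_range [Countable ι] :
    fiberAtoms a t (Prod.snd ⁻¹' Set.range a)ᶜ = 0 := by
  simp [fiberAtoms, Measure.sum_apply_of_countable]

lemma integrable_fiberAtoms [Finite ι] {E : Type*} [NormedAddCommGroup E] (f : ℝ × β → E) :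
    Integrable f (fiberAtoms a t) :=
  integrable_sum_dirac (fun _ => ENNReal.ofReal_ne_top) .of_finite

variable {t}

lemma integral_pow_mul_fiberAtoms [Fintype ι] (ht : ∀ i, 0 < t 0 i) {m : ℕ} (hm : m ≤ 1)
    (g : β → ℝ) :
    ∫ p, p.1 ^ m * g p.2 ∂fiberAtoms a t = ∑ i, t m i * g (a i) := by
  have moment (i : ι) : t 0 i * (t 1 i / t 0 i) ^ m = t m i := by
    interval_cases m
    · simp
    · rw [pow_one, mul_div_cancel₀ _ (ht i).ne']
  rw [fiberAtoms, integral_sum_dirac fun _ => ENNReal.ofReal_ne_top, tsum_fintype]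
  simp only [ENNReal.toReal_ofReal (ht _).le, smul_eq_mul, ← mul_assoc, moment]

end FiberAtoms

section TwoNodeWeights

variable {K : Type*} [Field K] {a₀ a₁ : K} {c : ℕ → K}

/-- The weights at the nodes `a₀`, `a₁` with zeroth moment `c 0` and first moment `c 1`, obtained
by applying the functional `X ^ n ↦ c n` to the two Lagrange basis polynomials. -/
def twoNodeWeights (a₀ a₁ : K) (c : ℕ → K) : Fin 2 → K :=
  ![(a₁ * c 0 - c 1) / (a₁ - a₀), (c 1 - a₀ * c 0) / (a₁ - a₀)]

lemma sum_twoNodeWeights_mul_pow (ha : a₀ ≠ a₁) {n : ℕ} (hn : n ≤ 1) :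
    ∑ i, twoNodeWeights a₀ a₁ c i * ![a₀, a₁] i ^ n = c n := by
  have hd : a₁ - a₀ ≠ 0 := sub_ne_zero.2 ha.symm
  simp only [twoNodeWeights, Fin.sum_univ_two, Matrix.cons_val_zero, Matrix.cons_val_one]
  interval_cases n <;> field_simp <;> ring

lemma twoNodeWeights_pos [LinearOrder K] [IsStrictOrderedRing K] (hc : 0 < c 0)
    (h₀ : a₀ < c 1 / c 0) (h₁ : c 1 / c 0 < a₁) (i : Fin 2) :
    0 < twoNodeWeights a₀ a₁ c i := by
  have hd : 0 < a₁ - a₀ := sub_pos.2 (h₀.trans h₁)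
  fin_cases i
  · exact div_pos (sub_pos.2 ((div_lt_iff₀ hc).1 h₁)) hd
  · exact div_pos (sub_pos.2 ((lt_div_iff₀ hc).1 h₀)) hd

end TwoNodeWeights

/-- Construction of solutions in the case `(ii)` of Theorem 2.1: if `s_{0,0} > 0` and
`a_0 < s_{0,1}/s_{0,0} < a_1`, then the truncated two-dimensional moment problem with
`M = N = 1` has a solution supported in the union of the lines `x_2 = a_0`, `x_2 = a_1`. -/
theorem truncated_moment_problem_M1_N1_solution_on_two_lines
    (s : ℕ → ℕ → ℝ) (h : 0 < s 0 0) (a0 a1 : ℝ)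
    (h0 : a0 < s 0 1 / s 0 0) (h1 : s 0 1 / s 0 0 < a1) :
    ∃ μ : Measure (ℝ × ℝ),
      μ ({p : ℝ × ℝ | p.2 = a0} ∪ {p : ℝ × ℝ | p.2 = a1})ᶜ = 0 ∧
      ∀ m ≤ 1, ∀ n ≤ 1,
        Integrable (fun p : ℝ × ℝ => p.1 ^ m * p.2 ^ n) μ ∧
        ∫ p : ℝ × ℝ, p.1 ^ m * p.2 ^ n ∂μ = s m n := by
  let a : Fin 2 → ℝ := ![a0, a1]
  let t (m : ℕ) : Fin 2 → ℝ := twoNodeWeights a0 a1 (s m)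
  have lines : {p : ℝ × ℝ | p.2 = a0} ∪ {p | p.2 = a1} = Prod.snd ⁻¹' Set.range a := by
    ext p
    simp [a, eq_comm, or_comm]
  refine ⟨fiberAtoms a t, lines ▸ fiberAtoms_compl_preimage_range a t,
    fun m hm n hn => ⟨integrable_fiberAtoms a t _, ?_⟩⟩
  calc ∫ p, p.1 ^ m * p.2 ^ n ∂fiberAtoms a t
      = ∑ i, t m i * a i ^ n :=
        integral_pow_mul_fiberAtoms a (twoNodeWeights_pos h h0 h1) hm (· ^ n)
    _ = s m n := sum_twoNodeWeights_mul_pow (h0.trans h1).ne hn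
end

section
/- Let {s_{m,n}} with m ∈ {0,1}, n ∈ {0,1,2} be real numbers. There exists a nonnegative Borel measure μ on ℝ² such that x_1^m x_2^n is μ-integrable and ∫_{ℝ²} x_1^m x_2^n dμ = s_{m,n} for all m ∈ {0,1}, n ∈ {0,1,2}, if and only if one of the following holds: (a) s_{0,0} = s_{0,1} = s_{0,2} = s_{1,0} = s_{1,1} = s_{1,2} = 0; (b) s_{0,0} > 0 and there exists α ∈ ℝ with s_{m,n} = α^n s_{m,0} for m = 0,1 and n = 1,2; (c) s_{0,0} > 0 and s_{0,0} s_{0,2} − s_{0,1}² > 0. -/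
open MeasureTheory

/-!
If `μ` represents the data, then the marginal of `μ` in `x₂` has moments `s 0 0`, `s 0 1`, `s 0 2`.
By the equality case of Jensen's inequality for the square, either `x₂` is `μ`-almost everywhere
constant or `s 0 0 * s 0 2 - s 0 1 ^ 2` is positive.

Conversely, atoms at `(cᵢ / wᵢ, tᵢ)` of masses `wᵢ > 0` have the moments `∑ wᵢ tᵢⁿ` and `∑ cᵢ tᵢⁿ`,
so the moments with `m = 1` are those of an arbitrary signed measure on the same nodes. Three
distinct nodes leave no constraint on these, the Vandermonde matrix being invertible, and
`s 0 0`, `s 0 1`, `s 0 2` are the moments of three atoms as soon as their Hankel matrix is positive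
definite.
-/

theorem ae_eq_const_or_sq_integral_lt {X : Type*} [MeasurableSpace X] {μ : Measure X}
    [IsFiniteMeasure μ] {g : X → ℝ} (hg : MemLp g 2 μ) :
    (∃ α, ∀ᵐ x ∂μ, g x = α) ∨ (∫ x, g x ∂μ) ^ 2 < μ.real Set.univ * ∫ x, g x ^ 2 ∂μ := by
  rcases eq_zero_or_neZero μ with rfl | _
  · exact .inl ⟨0, by simp⟩
  have hmass : 0 < μ.real Set.univ := measureReal_univ_pos
  have jensen := (even_two.strictConvexOn_pow two_ne_zero).ae_eq_const_or_map_average_lt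
    (continuous_pow 2).continuousOn isClosed_univ (.of_forall fun x => Set.mem_univ (g x))
    (hg.integrable one_le_two) hg.integrable_sq
  refine jensen.imp (fun h => ⟨_, h⟩) fun h => ?_
  simp only [average_eq, smul_eq_mul, mul_pow, inv_pow] at h
  field_simp at h
  exact h

theorem exists_sum_mul_pow_eq_of_injective {K : Type*} [Field K] {N : ℕ} {t : Fin N → K}
    (ht : Function.Injective t) (s : Fin N → K) :
    ∃ c : Fin N → K, ∀ n : Fin N, ∑ i, c i * t i ^ (n : ℕ) = s n := by
  have hunit : IsUnit (Matrix.vandermonde t) :=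
    (Matrix.isUnit_iff_isUnit_det _).2 (Matrix.det_vandermonde_ne_zero_iff.2 ht).isUnit
  obtain ⟨c, hc⟩ := Matrix.vecMul_surjective_iff_isUnit.2 hunit s
  exact ⟨c, congrFun hc⟩

theorem exists_three_pos_atoms_of_hankel_pos {s : ℕ → ℝ} (hs : 0 < s 0)
    (hdet : 0 < s 0 * s 2 - s 1 ^ 2) :
    ∃ w t : Fin 3 → ℝ, (∀ i, 0 < w i) ∧ Function.Injective t ∧
      ∀ n ≤ 2, ∑ i, w i * t i ^ n = s n := by
  obtain ⟨a, ha⟩ : ∃ a, s 1 = s 0 * a := ⟨s 1 / s 0, by field_simp⟩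
  -- Masses `1/4, 1/2, 1/4` at `-h, 0, h` have variance `h ^ 2 / 2`.
  obtain ⟨h, hpos, hh⟩ : ∃ h : ℝ, 0 < h ∧ s 2 = s 0 * (a ^ 2 + h ^ 2 / 2) := by
    have hvar : 0 < s 2 / s 0 - a ^ 2 := by
      have : s 2 / s 0 - a ^ 2 = (s 0 * s 2 - s 1 ^ 2) / s 0 ^ 2 := by rw [ha]; field_simp
      rw [this]; positivity
    refine ⟨√(2 * (s 2 / s 0 - a ^ 2)), by positivity, ?_⟩
    rw [Real.sq_sqrt (by positivity)]
    field_simp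
    ring
  refine ⟨![s 0 / 4, s 0 / 2, s 0 / 4], ![a - h, a, a + h], ?_, ?_, fun n hn => ?_⟩
  · simp [Fin.forall_fin_succ, hs]
  · refine StrictMono.injective (Fin.strictMono_iff_lt_succ.2 ?_)
    simp [Fin.forall_fin_succ, hpos]
  · interval_cases n <;> simp [Fin.sum_univ_three, ha, hh] <;> ring

/-- `μ` solves the truncated moment problem with rectangular data `s m n`, `m ≤ M`, `n ≤ N`. The
values of `s` outside this range play no role. -/
def IsMomentMeasure (M N : ℕ) (s : ℕ → ℕ → ℝ) (μ : Measure (ℝ × ℝ)) : Prop :=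
  ∀ m ≤ M, ∀ n ≤ N, Integrable (fun p : ℝ × ℝ => p.1 ^ m * p.2 ^ n) μ ∧
    ∫ p : ℝ × ℝ, p.1 ^ m * p.2 ^ n ∂μ = s m n

theorem isMomentMeasure_zero_iff {M N : ℕ} {s : ℕ → ℕ → ℝ} :
    IsMomentMeasure M N s 0 ↔ ∀ m ≤ M, ∀ n ≤ N, s m n = 0 := by
  simp [IsMomentMeasure, eq_comm]

namespace IsMomentMeasure

variable {M N : ℕ} {s : ℕ → ℕ → ℝ} {μ : Measure (ℝ × ℝ)}

theorem isFiniteMeasure (h : IsMomentMeasure M N s μ) : IsFiniteMeasure μ := by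
  have hone := (h 0 M.zero_le 0 N.zero_le).1
  simp only [pow_zero, mul_one] at hone
  exact (integrable_const_iff_isFiniteMeasure one_ne_zero).1 hone

theorem measureReal_univ (h : IsMomentMeasure M N s μ) : μ.real Set.univ = s 0 0 := by
  simpa using (h 0 M.zero_le 0 N.zero_le).2

theorem eq_zero (h : IsMomentMeasure M N s μ) (h00 : s 0 0 = 0) : μ = 0 := by
  have := h.isFiniteMeasure
  rwa [← h.measureReal_univ, measureReal_eq_zero_iff, Measure.measure_univ_eq_zero] at h00

theorem eq_pow_mul_of_ae_snd_eq (h : IsMomentMeasure M N s μ) {α : ℝ}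
    (hα : ∀ᵐ p ∂μ, p.2 = α) {m n : ℕ} (hm : m ≤ M) (hn : n ≤ N) : s m n = α ^ n * s m 0 := by
  rw [← (h m hm n hn).2, ← (h m hm 0 N.zero_le).2, ← integral_const_mul]
  refine integral_congr_ae ?_
  filter_upwards [hα] with p hp
  rw [hp, pow_zero, mul_one, mul_comm]

theorem ae_snd_eq_or_hankel_pos (h : IsMomentMeasure M N s μ) (hN : 2 ≤ N) :
    (∃ α, ∀ᵐ p ∂μ, p.2 = α) ∨ 0 < s 0 0 * s 0 2 - s 0 1 ^ 2 := by
  have := h.isFiniteMeasure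
  have h1 := h 0 M.zero_le 1 (one_le_two.trans hN)
  have h2 := h 0 M.zero_le 2 hN
  simp only [pow_zero, one_mul, pow_one] at h1 h2
  have hsnd : MemLp Prod.snd 2 μ :=
    (memLp_two_iff_integrable_sq measurable_snd.aestronglyMeasurable).2 h2.1
  simpa only [h1.2, h2.2, h.measureReal_univ, sub_pos] using ae_eq_const_or_sq_integral_lt hsnd

end IsMomentMeasure

section Existence

variable {N : ℕ} {s : ℕ → ℕ → ℝ}

theorem exists_isMomentMeasure_of_atoms {ι : Type*} [Fintype ι] {w c t : ι → ℝ}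
    (hw : ∀ i, 0 < w i) (h0 : ∀ n ≤ N, ∑ i, w i * t i ^ n = s 0 n)
    (h1 : ∀ n ≤ N, ∑ i, c i * t i ^ n = s 1 n) : ∃ μ, IsMomentMeasure 1 N s μ := by
  have hfin : ∀ i, ENNReal.ofReal (w i) ≠ ⊤ := fun i => ENNReal.ofReal_ne_top
  refine ⟨.sum fun i => ENNReal.ofReal (w i) • .dirac (c i / w i, t i), fun m hm n hn => ?_⟩
  refine ⟨integrable_sum_dirac hfin (hasSum_fintype _).summable, ?_⟩
  rw [integral_sum_dirac hfin, tsum_fintype]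
  simp only [fun i => ENNReal.toReal_ofReal (hw i).le, smul_eq_mul]
  interval_cases m
  · simpa using h0 n hn
  · rw [← h1 n hn]
    refine Finset.sum_congr rfl fun i _ => ?_
    rw [pow_one, ← mul_assoc, mul_div_cancel₀ _ (hw i).ne']

theorem exists_isMomentMeasure_of_geometric (hs : 0 < s 0 0) {α : ℝ}
    (hα : ∀ m ≤ 1, ∀ n, 1 ≤ n → n ≤ N → s m n = α ^ n * s m 0) :
    ∃ μ, IsMomentMeasure 1 N s μ := by
  have hα' : ∀ m ≤ 1, ∀ n ≤ N, s m 0 * α ^ n = s m n := fun m hm n hn => by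
    rcases n.eq_zero_or_pos with rfl | hpos
    · rw [pow_zero, mul_one]
    · rw [hα m hm n hpos hn, mul_comm]
  refine exists_isMomentMeasure_of_atoms (ι := Unit) (w := fun _ => s 0 0) (c := fun _ => s 1 0)
    (t := fun _ => α) (fun _ => hs) ?_ ?_
  · simpa using hα' 0 zero_le_one
  · simpa using hα' 1 le_rfl

theorem exists_isMomentMeasure_of_injective {w t : Fin (N + 1) → ℝ} (hw : ∀ i, 0 < w i)
    (ht : Function.Injective t) (h0 : ∀ n ≤ N, ∑ i, w i * t i ^ n = s 0 n) :
    ∃ μ, IsMomentMeasure 1 N s μ := by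
  obtain ⟨c, hc⟩ := exists_sum_mul_pow_eq_of_injective ht fun n => s 1 n
  exact exists_isMomentMeasure_of_atoms hw h0 fun n hn => hc ⟨n, Nat.lt_succ_of_le hn⟩

theorem exists_isMomentMeasure_of_hankel_pos (hs : 0 < s 0 0)
    (hdet : 0 < s 0 0 * s 0 2 - s 0 1 ^ 2) : ∃ μ, IsMomentMeasure 1 2 s μ := by
  obtain ⟨w, t, hw, ht, h0⟩ := exists_three_pos_atoms_of_hankel_pos hs hdet
  exact exists_isMomentMeasure_of_injective hw ht h0

end Existence

/-- Theorem 2.2: the truncated two-dimensional moment problem with `M = 1`, `N = 2` is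
solvable iff (a) all six moments vanish, or (b) `s_{0,0} > 0` and `s_{m,n} = α^n s_{m,0}`
for some real `α`, or (c) `s_{0,0} > 0` and `s_{0,0} s_{0,2} - s_{0,1}² > 0`. -/
theorem truncated_moment_problem_M1_N2_solvable_iff (s : ℕ → ℕ → ℝ) :
    (∃ μ : Measure (ℝ × ℝ), ∀ m ≤ 1, ∀ n ≤ 2,
        Integrable (fun p : ℝ × ℝ => p.1 ^ m * p.2 ^ n) μ ∧
        ∫ p : ℝ × ℝ, p.1 ^ m * p.2 ^ n ∂μ = s m n)
    ↔ ((s 0 0 = 0 ∧ s 0 1 = 0 ∧ s 0 2 = 0 ∧ s 1 0 = 0 ∧ s 1 1 = 0 ∧ s 1 2 = 0) ∨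
      (0 < s 0 0 ∧ ∃ α : ℝ, ∀ m ≤ 1, ∀ n : ℕ, 1 ≤ n → n ≤ 2 → s m n = α ^ n * s m 0) ∨
      (0 < s 0 0 ∧ 0 < s 0 0 * s 0 2 - s 0 1 ^ 2)) := by
  change (∃ μ, IsMomentMeasure 1 2 s μ) ↔ _
  constructor
  · rintro ⟨μ, hμ⟩
    have hmass : 0 ≤ s 0 0 := hμ.measureReal_univ ▸ measureReal_nonneg
    rcases hmass.eq_or_lt with h00 | hs
    · have hzero := isMomentMeasure_zero_iff.1 (hμ.eq_zero h00.symm ▸ hμ)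
      left
      simp [hzero]
    · rcases hμ.ae_snd_eq_or_hankel_pos le_rfl with ⟨α, hα⟩ | hdet
      · exact .inr (.inl ⟨hs, α, fun m hm n _ hn => hμ.eq_pow_mul_of_ae_snd_eq hα hm hn⟩)
      · exact .inr (.inr ⟨hs, hdet⟩)
  · rintro (⟨h00, h01, h02, h10, h11, h12⟩ | ⟨hs, α, hα⟩ | ⟨hs, hdet⟩)
    · refine ⟨0, isMomentMeasure_zero_iff.2 fun m hm n hn => ?_⟩
      interval_cases m <;> interval_cases n <;> assumption
    · exact exists_isMomentMeasure_of_geometric hs hα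
    · exact exists_isMomentMeasure_of_hankel_pos hs hdet
end

section
/- Let {s_{m,n}} with m ∈ {0,1}, n ∈ {0,1,2} be real numbers with s_{0,0} > 0 and s_{0,0} s_{0,2} − s_{0,1}² > 0. Let a_2 be any real number with a_2 > √(s_{0,2}/s_{0,0}), and set a_1 = s_{0,1}/s_{0,0}, a_0 = −a_2. Then there exists a nonnegative Borel measure μ on ℝ², supported in the union of the three horizontal lines {x_2 = a_0}, {x_2 = a_1}, {x_2 = a_2}, such that ∫_{ℝ²} x_1^m x_2^n dμ = s_{m,n} for all m ∈ {0,1}, n ∈ {0,1,2}. -/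
open MeasureTheory

/-!
Regard the row `s m ·` as a linear functional `L m` on polynomials in the second variable. A measure
carried by the lines `x₂ = a i` is a family of one-dimensional measures, and by Lagrange
interpolation it has the right moments as soon as the `m`-th moment of the measure on the `i`-th
line is `L m (ℓ i)`, where `ℓ i` is the Lagrange basis polynomial of the node `a i`. When `m ≤ 1`
only the mass and the first moment are prescribed on each line, so one point mass per line suffices,
provided that the masses `L 0 (ℓ i)` are positive.

For three nodes, `L 0 (ℓ i)` is `L 0 ((X - b) * (X - c))` divided by `(a i - b) * (a i - c)`,
with `b` and `c` the two other nodes. If `b` is the mean `s 0 1 / s 0 0`, the numerator equals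
`(s 0 0 * s 0 2 - s 0 1 ^ 2) / s 0 0`, which is positive and does not depend on `c`. If instead
`b < -√(s 0 2 / s 0 0)` and `√(s 0 2 / s 0 0) < c`, the numerator is negative. As the mean lies
between the outer nodes, the three signs agree with those of the denominators.
-/

section MomentFunctional

open Polynomial

/-- The moment (Riesz) functional of a sequence `t`: the linear functional on polynomials that
sends `X ^ n` to `t n`. -/
noncomputable def momentFunctional {R : Type*} [CommSemiring R] (t : ℕ → R) : R[X] →ₗ[R] R :=
  (basisMonomials R).constr R t

theorem momentFunctional_X_pow {R : Type*} [CommSemiring R] (t : ℕ → R) (n : ℕ) :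
    momentFunctional t (X ^ n) = t n := by
  rw [X_pow_eq_monomial]
  exact (basisMonomials R).constr_basis R t n

theorem momentFunctional_X_sub_C_mul_X_sub_C {R : Type*} [CommRing R] (t : ℕ → R) (b c : R) :
    momentFunctional t ((X - C b) * (X - C c)) = t 2 - (b + c) * t 1 + b * c * t 0 := by
  have expand : (X - C b) * (X - C c) = X ^ 2 - (b + c) • X ^ 1 + (b * c) • X ^ 0 := by
    simp only [smul_eq_C_mul, C_add, C_mul]
    ring
  simp only [expand, map_add, map_sub, map_smul, momentFunctional_X_pow, smul_eq_mul]

section Field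

variable {F : Type*} [Field F]

section Lagrange

variable {ι : Type*} [DecidableEq ι] {J : Finset ι} {a : ι → F}

theorem momentFunctional_basis_of_erase_eq_pair (t : ℕ → F) {i j k : ι} (hjk : j ≠ k)
    (hJ : J.erase i = {j, k}) :
    momentFunctional t (Lagrange.basis J a i) =
      momentFunctional t ((X - C (a j)) * (X - C (a k))) / ((a i - a j) * (a i - a k)) := by
  have factor : Lagrange.basis J a i =
      ((a i - a j) * (a i - a k))⁻¹ • ((X - C (a j)) * (X - C (a k))) := by
    rw [Lagrange.basis, hJ, Finset.prod_pair hjk]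
    simp only [Lagrange.basisDivisor, smul_eq_C_mul, mul_inv, C_mul]
    ring
  rw [factor, map_smul, smul_eq_mul, inv_mul_eq_div]

theorem sum_pow_mul_momentFunctional_basis
    (ha : Set.InjOn a J) (t : ℕ → F) {n : ℕ} (hn : n < J.card) :
    ∑ i ∈ J, a i ^ n * momentFunctional t (Lagrange.basis J a i) = t n := by
  have interpolate_pow : (X ^ n : F[X]) = Lagrange.interpolate J a fun i => a i ^ n := by
    simpa only [eval_pow, eval_X] using
      Lagrange.eq_interpolate (f := X ^ n) ha (by rw [degree_X_pow]; exact_mod_cast hn)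
  conv_rhs => rw [← momentFunctional_X_pow t n, interpolate_pow, Lagrange.interpolate_apply]
  simp only [← smul_eq_C_mul, map_sum, map_smul, smul_eq_mul]

end Lagrange

theorem momentFunctional_X_sub_mean_mul_X_sub_C {t : ℕ → F} (h0 : t 0 ≠ 0) (c : F) :
    momentFunctional t ((X - C (t 1 / t 0)) * (X - C c)) = (t 0 * t 2 - t 1 ^ 2) / t 0 := by
  rw [momentFunctional_X_sub_C_mul_X_sub_C]
  field_simp
  ring

end Field

section Real

variable {t : ℕ → ℝ}

theorem abs_mean_lt_sqrt (h0 : 0 < t 0) (hvar : 0 < t 0 * t 2 - t 1 ^ 2) :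
    |t 1 / t 0| < √(t 2 / t 0) := by
  refine Real.lt_sqrt_of_sq_lt ?_
  rw [sq_abs, div_pow, div_lt_div_iff₀ (by positivity) h0]
  nlinarith

theorem momentFunctional_X_sub_C_mul_X_sub_C_neg (h0 : 0 < t 0)
    (hvar : 0 < t 0 * t 2 - t 1 ^ 2) {b c : ℝ} (hb : b < -√(t 2 / t 0))
    (hc : √(t 2 / t 0) < c) : momentFunctional t ((X - C b) * (X - C c)) < 0 := by
  obtain ⟨hml, hmr⟩ := abs_lt.1 (abs_mean_lt_sqrt h0 hvar)
  have ht2 : 0 < t 2 := pos_of_mul_pos_right (by linarith [sq_nonneg (t 1)]) h0.le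
  have hr : √(t 2 / t 0) ^ 2 = t 2 / t 0 := Real.sq_sqrt (by positivity)
  set m := t 1 / t 0
  set r := √(t 2 / t 0)
  have h1 : t 1 = t 0 * m := (mul_div_cancel₀ _ h0.ne').symm
  have h2 : t 2 = t 0 * r ^ 2 := by rw [hr, mul_div_cancel₀ _ h0.ne']
  calc momentFunctional t ((X - C b) * (X - C c))
      = -(t 0 * ((c - r) * (m - b) + (-r - b) * (r - m))) := by
        rw [momentFunctional_X_sub_C_mul_X_sub_C, h1, h2]
        ring
    _ < 0 := neg_lt_zero.2 <| mul_pos h0 <| add_pos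
        (mul_pos (sub_pos.2 hc) (by linarith)) (mul_pos (by linarith) (sub_pos.2 hmr))

theorem momentFunctional_basis_pos_of_three_nodes (h0 : 0 < t 0)
    (hvar : 0 < t 0 * t 2 - t 1 ^ 2) {b c : ℝ} (hb : b < -√(t 2 / t 0))
    (hc : √(t 2 / t 0) < c) (i : Fin 3) :
    0 < momentFunctional t (Lagrange.basis Finset.univ ![b, t 1 / t 0, c] i) := by
  obtain ⟨hml, hmr⟩ := abs_lt.1 (abs_mean_lt_sqrt h0 hvar)
  have hbm : b < t 1 / t 0 := hb.trans hml
  have hmc : t 1 / t 0 < c := hmr.trans hc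
  have variance_pos (x : ℝ) : 0 < momentFunctional t ((X - C (t 1 / t 0)) * (X - C x)) :=
    momentFunctional_X_sub_mean_mul_X_sub_C h0.ne' x ▸ div_pos hvar h0
  match i with
  | 0 =>
    rw [momentFunctional_basis_of_erase_eq_pair t (j := 1) (k := 2) (by decide) (by decide)]
    exact div_pos (variance_pos c)
      (mul_pos_of_neg_of_neg (sub_neg.2 hbm) (sub_neg.2 (hbm.trans hmc)))
  | 1 =>
    rw [momentFunctional_basis_of_erase_eq_pair t (j := 0) (k := 2) (by decide) (by decide)]
    exact div_pos_of_neg_of_neg (momentFunctional_X_sub_C_mul_X_sub_C_neg h0 hvar hb hc)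
      (mul_neg_of_pos_of_neg (sub_pos.2 hbm) (sub_neg.2 hmc))
  | 2 =>
    rw [momentFunctional_basis_of_erase_eq_pair t (j := 1) (k := 0) (by decide) (by decide)]
    exact div_pos (variance_pos b) (mul_pos (sub_pos.2 hmc) (sub_pos.2 (hbm.trans hmc)))

end Real

end MomentFunctional

section SumFibers

variable {ι α β : Type*} [MeasurableSpace α] [MeasurableSpace β] [MeasurableSingletonClass β]
  {J : Finset ι} {ν : ι → Measure α} {a : ι → β}

/-- The measure on `α × β` that puts a copy of `ν i` on the horizontal fibre `α × {a i}` for each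
`i ∈ J`, adding the copies when several `a i` coincide. -/
noncomputable def sumFibers (J : Finset ι) (ν : ι → Measure α) (a : ι → β) : Measure (α × β) :=
  ∑ i ∈ J, (ν i).map (·, a i)

theorem sumFibers_snd_mem_image : ∀ᵐ p ∂sumFibers J ν a, p.2 ∈ a '' J := by
  have fibre_null (i) (hi : i ∈ J) : (ν i).map (·, a i) {p | p.2 ∉ a '' J} = 0 := by
    have preimage_empty : (·, a i) ⁻¹' {p : α × β | p.2 ∉ a '' J} = ∅ :=
      Set.eq_empty_of_forall_notMem fun _ hx => hx ⟨i, hi, rfl⟩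
    rw [(measurableEmbedding_prod_mk_right (a i)).map_apply, preimage_empty, measure_empty]
  rw [ae_iff, sumFibers, Measure.finsetSum_apply]
  exact Finset.sum_eq_zero fibre_null

variable {E : Type*} [NormedAddCommGroup E] {f : α × β → E}

theorem integrable_sumFibers_iff :
    Integrable f (sumFibers J ν a) ↔ ∀ i ∈ J, Integrable (fun x => f (x, a i)) (ν i) := by
  simp only [sumFibers, integrable_finsetSum_measure,
    (measurableEmbedding_prod_mk_right _).integrable_map_iff, Function.comp_def]

theorem integral_sumFibers [NormedSpace ℝ E]
    (hf : ∀ i ∈ J, Integrable (fun x => f (x, a i)) (ν i)) :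
    ∫ p, f p ∂sumFibers J ν a = ∑ i ∈ J, ∫ x, f (x, a i) ∂ν i := by
  rw [sumFibers, integral_finsetSum_measure fun i hi =>
    (measurableEmbedding_prod_mk_right _).integrable_map_iff.2 (hf i hi)]
  simp only [(measurableEmbedding_prod_mk_right _).integral_map]

end SumFibers

section MomentProblem

/-- `ν` solves the truncated one-dimensional moment problem with data `t 0, …, t M`. -/
def HasMoments (M : ℕ) (t : ℕ → ℝ) (ν : Measure ℝ) : Prop :=
  ∀ m ≤ M, Integrable (fun x => x ^ m) ν ∧ ∫ x, x ^ m ∂ν = t m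

/-- `μ` solves the truncated two-dimensional moment problem with rectangular data `s m n`,
`m ≤ M`, `n ≤ N`. -/
def HasRectangularMoments (M N : ℕ) (s : ℕ → ℕ → ℝ) (μ : Measure (ℝ × ℝ)) : Prop :=
  ∀ m ≤ M, ∀ n ≤ N, Integrable (fun p : ℝ × ℝ => p.1 ^ m * p.2 ^ n) μ ∧
    ∫ p : ℝ × ℝ, p.1 ^ m * p.2 ^ n ∂μ = s m n

theorem hasMoments_one_smul_dirac {t : ℕ → ℝ} (h0 : 0 < t 0) :
    HasMoments 1 t (ENNReal.ofReal (t 0) • Measure.dirac (t 1 / t 0)) := by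
  refine fun m hm =>
    ⟨(integrable_dirac enorm_lt_top).smul_measure ENNReal.ofReal_ne_top, ?_⟩
  rw [integral_smul_measure, integral_dirac, ENNReal.toReal_ofReal h0.le, smul_eq_mul]
  interval_cases m
  · rw [pow_zero, mul_one]
  · rw [pow_one, mul_div_cancel₀ _ h0.ne']

variable {ι : Type*} [DecidableEq ι] {J : Finset ι} {a : ι → ℝ} {N : ℕ} {s : ℕ → ℕ → ℝ}

theorem hasRectangularMoments_sumFibers {M : ℕ} {ν : ι → Measure ℝ} (ha : Set.InjOn a J)
    (hN : N < J.card)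
    (hν : ∀ i ∈ J, HasMoments M (fun m => momentFunctional (s m) (Lagrange.basis J a i)) (ν i)) :
    HasRectangularMoments M N s (sumFibers J ν a) := by
  intro m hm n hn
  have integrable_fibre (i) (hi : i ∈ J) : Integrable (fun x => x ^ m * a i ^ n) (ν i) :=
    (hν i hi m hm).1.mul_const _
  refine ⟨integrable_sumFibers_iff.2 integrable_fibre, ?_⟩
  calc ∫ p : ℝ × ℝ, p.1 ^ m * p.2 ^ n ∂sumFibers J ν a
      = ∑ i ∈ J, ∫ x, x ^ m * a i ^ n ∂ν i := integral_sumFibers integrable_fibre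
    _ = ∑ i ∈ J, a i ^ n * momentFunctional (s m) (Lagrange.basis J a i) :=
        Finset.sum_congr rfl fun i hi => by
          rw [integral_mul_const, (hν i hi m hm).2, mul_comm]
    _ = s m n := sum_pow_mul_momentFunctional_basis ha (s m) (hn.trans_lt hN)

theorem exists_hasRectangularMoments_one_of_basis_pos (ha : Set.InjOn a J) (hN : N < J.card)
    (hpos : ∀ i ∈ J, 0 < momentFunctional (s 0) (Lagrange.basis J a i)) :
    ∃ μ : Measure (ℝ × ℝ), (∀ᵐ p ∂μ, p.2 ∈ a '' J) ∧ HasRectangularMoments 1 N s μ :=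
  ⟨_, sumFibers_snd_mem_image, hasRectangularMoments_sumFibers ha hN fun i hi =>
    hasMoments_one_smul_dirac (hpos i hi)⟩

end MomentProblem

theorem truncated_moment_problem_M1_N2_solution_on_three_lines_general
    (s : ℕ → ℕ → ℝ) (h0 : 0 < s 0 0) (hdet : 0 < s 0 0 * s 0 2 - s 0 1 ^ 2)
    (a0 a1 a2 : ℝ) (ha2 : Real.sqrt (s 0 2 / s 0 0) < a2)
    (ha1 : a1 = s 0 1 / s 0 0) (ha0 : a0 < -Real.sqrt (s 0 2 / s 0 0)) :
    ∃ μ : Measure (ℝ × ℝ),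
      μ ({p : ℝ × ℝ | p.2 = a0} ∪ {p : ℝ × ℝ | p.2 = a1} ∪ {p : ℝ × ℝ | p.2 = a2})ᶜ = 0 ∧
      ∀ m ≤ 1, ∀ n ≤ 2,
        Integrable (fun p : ℝ × ℝ => p.1 ^ m * p.2 ^ n) μ ∧
        ∫ p : ℝ × ℝ, p.1 ^ m * p.2 ^ n ∂μ = s m n := by
  subst ha1
  obtain ⟨hml, hmr⟩ := abs_lt.1 (abs_mean_lt_sqrt h0 hdet)
  have nodes_strictMono : StrictMono ![a0, s 0 1 / s 0 0, a2] := by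
    simp [Fin.strictMono_iff_lt_succ, Fin.forall_fin_two, ha0.trans hml, hmr.trans ha2]
  obtain ⟨μ, hsupp, hμ⟩ := exists_hasRectangularMoments_one_of_basis_pos
    (J := Finset.univ) (N := 2) nodes_strictMono.injective.injOn (by simp) fun i _ =>
      momentFunctional_basis_pos_of_three_nodes h0 hdet ha0 ha2 i
  refine ⟨μ, measure_mono_null (fun p hp => ?_) (ae_iff.1 hsupp), hμ⟩
  rintro ⟨i, -, hi⟩
  exact hp (by fin_cases i <;> simp [← hi])

/-- Construction of solutions in the case `(c)` of Theorem 2.2: if `s_{0,0} > 0` and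
`s_{0,0} s_{0,2} - s_{0,1}² > 0`, then for any `a_2 > √(s_{0,2}/s_{0,0})`, with
`a_1 = s_{0,1}/s_{0,0}` and `a_0 = -a_2`, the truncated two-dimensional moment problem
with `M = 1`, `N = 2` has a solution supported in the union of the three lines
`x_2 = a_0`, `x_2 = a_1`, `x_2 = a_2`. -/
theorem truncated_moment_problem_M1_N2_solution_on_three_lines
    (s : ℕ → ℕ → ℝ) (h0 : 0 < s 0 0) (hdet : 0 < s 0 0 * s 0 2 - s 0 1 ^ 2)
    (a0 a1 a2 : ℝ) (ha2 : Real.sqrt (s 0 2 / s 0 0) < a2)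
    (ha1 : a1 = s 0 1 / s 0 0) (ha0 : a0 = -a2) :
    ∃ μ : Measure (ℝ × ℝ),
      μ ({p : ℝ × ℝ | p.2 = a0} ∪ {p : ℝ × ℝ | p.2 = a1} ∪ {p : ℝ × ℝ | p.2 = a2})ᶜ = 0 ∧
      ∀ m ≤ 1, ∀ n ≤ 2,
        Integrable (fun p : ℝ × ℝ => p.1 ^ m * p.2 ^ n) μ ∧
        ∫ p : ℝ × ℝ, p.1 ^ m * p.2 ^ n ∂μ = s m n :=
  truncated_moment_problem_M1_N2_solution_on_three_lines_general s h0 hdet a0 a1 a2 ha2 ha1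
    (ha0 ▸ neg_lt_neg ha2)
end

section
/- Let {s_{m,n}}_{m,n ∈ {0,1,2,3}} be real numbers satisfying s_{0,0} > 0, s_{0,0} s_{0,2} − s_{0,1}² > 0, and s_{0,0} s_{2,0} − s_{1,0}² > 0. Let I_1, I_2, I_3 be the sets of positive real numbers a_2 satisfying, respectively: (−a_2² s_{0,0} + s_{0,2})(−a_2² s_{2,0} + s_{2,2}) > (−a_2² s_{1,0} + s_{1,2})²; (a_2 s_{0,0} − s_{0,1})(a_2 s_{2,0} − s_{2,1}) > (a_2 s_{1,0} − s_{1,1})²; (a_2 s_{0,0} + s_{0,1})(a_2 s_{2,0} + s_{2,1}) > (a_2 s_{1,0} + s_{1,1})². If the intersection (|s_{0,1}|/s_{0,0}, √(s_{0,2}/s_{0,0})) ∩ I_1 ∩ I_2 ∩ I_3 is nonempty, then there exists a nonnegative Borel measure μ on ℝ² such that x_1^m x_2^n is μ-integrable and ∫_{ℝ²} x_1^m x_2^n dμ = s_{m,n} for all m, n ∈ {0,1,2,3}. -/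
open MeasureTheory Filter Topology Bornology

/-!
Look for a measure carried by the four horizontal lines at heights `±a` and `±b`. Lagrange
interpolation in `x₂` on these heights determines the `x₁`-moments on each line, and prescribed
`x₁`-moments up to degree `3` are realised by two atoms as soon as their Hankel matrix is positive
definite. As `|b| → ∞`, the moments on the lines `±a` tend to positive multiples of
`a s_{m,0} ± s_{m,1}`, and those on the lines `±b`, multiplied by `b²`, to positive multiples of
`s_{m,2} - a² s_{m,0}`. The hypotheses say that these limits are positive definite, which is an
open condition, so some finite `b` works.
-/

/-- Solvability of the truncated Hamburger moment problem: `c 0, …, c M` are the moments of a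
measure on the line. The values `c m` with `m > M` are ignored. -/
def IsTruncatedMomentSequence (M : ℕ) (c : ℕ → ℝ) : Prop :=
  ∃ μ : Measure ℝ, ∀ m ≤ M, Integrable (fun x => x ^ m) μ ∧ ∫ x, x ^ m ∂μ = c m

/-- Solvability of the truncated moment problem in the plane with rectangular data: the `s m n`
with `m ≤ M` and `n ≤ N` are the moments of a measure. The other values of `s` are ignored. -/
def IsTruncatedMomentArray (M N : ℕ) (s : ℕ → ℕ → ℝ) : Prop :=
  ∃ μ : Measure (ℝ × ℝ), ∀ m ≤ M, ∀ n ≤ N,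
    Integrable (fun p : ℝ × ℝ => p.1 ^ m * p.2 ^ n) μ ∧
    ∫ p : ℝ × ℝ, p.1 ^ m * p.2 ^ n ∂μ = s m n

/-- Positive definiteness of the Hankel matrix `!![c 0, c 1; c 1, c 2]`, expressed by its leading
principal minors. -/
def HankelPosDef (c : ℕ → ℝ) : Prop :=
  0 < c 0 ∧ c 1 ^ 2 < c 0 * c 2

/-- The functional `y ^ n ↦ c n` on cubic polynomials, evaluated at the Lagrange basis polynomial
`(u² - y²) (t + y) / (2 t (u² - t²))` of the node `t` among the nodes `±t, ±u`.
It is meaningful only if these nodes are distinct; otherwise the division gives `0`. -/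
noncomputable def lagrangeWeight (t u : ℝ) (c : ℕ → ℝ) : ℝ :=
  (u ^ 2 * (t * c 0 + c 1) - (t * c 2 + c 3)) / (2 * t * (u ^ 2 - t ^ 2))

section Measures

variable {M N : ℕ} {c : ℕ → ℝ} {s s' : ℕ → ℕ → ℝ}

lemma isTruncatedMomentSequence_sum_atoms {ι : Type*} (J : Finset ι) {p : ι → ℝ} (x : ι → ℝ)
    (hp : ∀ i ∈ J, 0 ≤ p i) :
    IsTruncatedMomentSequence M fun m => ∑ i ∈ J, p i * x i ^ m := by
  refine ⟨∑ i ∈ J, ENNReal.ofReal (p i) • Measure.dirac (x i), fun m _ => ?_⟩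
  have hint : ∀ i ∈ J, Integrable (fun y : ℝ => y ^ m)
      (ENNReal.ofReal (p i) • Measure.dirac (x i)) := fun i _ =>
    (integrable_dirac enorm_lt_top).smul_measure ENNReal.ofReal_ne_top
  refine ⟨integrable_finsetSum_measure.2 hint, ?_⟩
  rw [integral_finsetSum_measure hint]
  refine Finset.sum_congr rfl fun i hi => ?_
  rw [integral_smul_measure, integral_dirac, ENNReal.toReal_ofReal (hp i hi), smul_eq_mul]

lemma IsTruncatedMomentSequence.mul_pow (hc : IsTruncatedMomentSequence M c) (N : ℕ) (t : ℝ) :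
    IsTruncatedMomentArray M N fun m n => c m * t ^ n := by
  obtain ⟨μ, hμ⟩ := hc
  refine ⟨μ.map fun x => (x, t), fun m hm n _ => ?_⟩
  obtain ⟨hint, hmoment⟩ := hμ m hm
  have hline : AEMeasurable (fun x : ℝ => (x, t)) μ := by fun_prop
  have hmonomial : AEStronglyMeasurable (fun p : ℝ × ℝ => p.1 ^ m * p.2 ^ n)
      (μ.map fun x => (x, t)) := by fun_prop
  refine ⟨(integrable_map_measure hmonomial hline).2 (hint.mul_const (t ^ n)), ?_⟩
  rw [integral_map hline hmonomial, integral_mul_const (t ^ n) fun x : ℝ => x ^ m, hmoment]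

lemma IsTruncatedMomentArray.add (hs : IsTruncatedMomentArray M N s)
    (hs' : IsTruncatedMomentArray M N s') :
    IsTruncatedMomentArray M N fun m n => s m n + s' m n := by
  obtain ⟨μ, hμ⟩ := hs
  obtain ⟨ν, hν⟩ := hs'
  refine ⟨μ + ν, fun m hm n hn => ?_⟩
  obtain ⟨hintμ, hmomentμ⟩ := hμ m hm n hn
  obtain ⟨hintν, hmomentν⟩ := hν m hm n hn
  exact ⟨hintμ.add_measure hintν, by
    rw [integral_add_measure hintμ hintν, hmomentμ, hmomentν]⟩

lemma IsTruncatedMomentArray.congr (hs : IsTruncatedMomentArray M N s)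
    (h : ∀ m ≤ M, ∀ n ≤ N, s m n = s' m n) : IsTruncatedMomentArray M N s' := by
  obtain ⟨μ, hμ⟩ := hs
  exact ⟨μ, fun m hm n hn => h m hm n hn ▸ hμ m hm n hn⟩

end Measures

lemma exists_pos_mul_eq_sub_eq {v : ℝ} (hv : 0 < v) (d : ℝ) :
    ∃ u w : ℝ, 0 < u ∧ 0 < w ∧ u * w = v ∧ u - w = d := by
  have hsq : √(d ^ 2 + 4 * v) ^ 2 = d ^ 2 + 4 * v := Real.sq_sqrt (by positivity)
  have habs : |d| < √(d ^ 2 + 4 * v) := Real.lt_sqrt_of_sq_lt (by rw [sq_abs]; linarith)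
  obtain ⟨hneg, hpos⟩ := abs_lt.1 habs
  exact ⟨(√(d ^ 2 + 4 * v) + d) / 2, (√(d ^ 2 + 4 * v) - d) / 2, by linarith, by linarith,
    by linear_combination hsq / 4, by ring⟩

lemma HankelPosDef.exists_two_atoms {c : ℕ → ℝ} (hc : HankelPosDef c) :
    ∃ x y p q : ℝ, 0 ≤ p ∧ 0 ≤ q ∧ ∀ m ≤ 3, p * x ^ m + q * y ^ m = c m := by
  obtain ⟨h0, hdet⟩ := hc
  obtain ⟨e, he⟩ : ∃ e, c 1 = c 0 * e := ⟨c 1 / c 0, by field_simp⟩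
  obtain ⟨v, hv⟩ : ∃ v, c 2 = c 0 * (e ^ 2 + v) := ⟨c 2 / c 0 - e ^ 2, by field_simp; ring⟩
  have hvpos : 0 < v := by
    rw [he, hv] at hdet
    have : 0 < c 0 ^ 2 * v := by linarith
    exact pos_of_mul_pos_right this (by positivity)
  obtain ⟨d, hd⟩ : ∃ d, c 3 = c 0 * (e ^ 3 + 3 * e * v + v * d) :=
    ⟨(c 3 / c 0 - e ^ 3 - 3 * e * v) / v, by field_simp; ring⟩
  obtain ⟨u, w, hu, hw, rfl, rfl⟩ := exists_pos_mul_eq_sub_eq hvpos d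
  -- Masses proportional to `w` and `u` at `e + u` and `e - w` have mean `e`, variance `u w` and
  -- third central moment `u w (u - w)`.
  refine ⟨e + u, e - w, c 0 * w / (u + w), c 0 * u / (u + w), by positivity, by positivity,
    fun m hm => ?_⟩
  interval_cases m
  · field_simp; ring
  · rw [he]; field_simp; ring
  · rw [hv]; field_simp; ring
  · rw [hd]; field_simp; ring

lemma HankelPosDef.isTruncatedMomentSequence {c : ℕ → ℝ} (hc : HankelPosDef c) :
    IsTruncatedMomentSequence 3 c := by
  obtain ⟨x, y, p, q, hp, hq, hmoment⟩ := hc.exists_two_atoms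
  obtain ⟨μ, hμ⟩ := isTruncatedMomentSequence_sum_atoms (M := 3) Finset.univ ![x, y]
    (p := ![p, q]) (by simp [Fin.forall_fin_two, hp, hq])
  refine ⟨μ, fun m hm => ⟨(hμ m hm).1, (hμ m hm).2.trans ?_⟩⟩
  simpa [Fin.sum_univ_two] using hmoment m hm

lemma hankelPosDef_const_mul_iff {k : ℝ} (hk : 0 < k) {c : ℕ → ℝ} :
    HankelPosDef (fun m => k * c m) ↔ HankelPosDef c := by
  have hsq : (k * c 1) ^ 2 < k * c 0 * (k * c 2) ↔ c 1 ^ 2 < c 0 * c 2 := by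
    rw [mul_pow, mul_mul_mul_comm, ← sq, mul_lt_mul_iff_right₀ (by positivity)]
  simp only [HankelPosDef, hsq, mul_pos_iff_of_pos_left hk]

lemma isOpen_setOf_hankelPosDef : IsOpen {c : ℕ → ℝ | HankelPosDef c} :=
  .inter (isOpen_lt continuous_const (continuous_apply 0))
    (isOpen_lt ((continuous_apply 1).pow 2) ((continuous_apply 0).mul (continuous_apply 2)))

lemma HankelPosDef.eventually {ι : Type*} {l : Filter ι} {c : ι → ℕ → ℝ} {c' : ℕ → ℝ}
    (hc' : HankelPosDef c') (hlim : ∀ m, Tendsto (fun i => c i m) l (𝓝 (c' m))) :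
    ∀ᶠ i in l, HankelPosDef (c i) :=
  (tendsto_pi_nhds.2 hlim).eventually (isOpen_setOf_hankelPosDef.mem_nhds hc')

section Interpolation

variable {a b : ℝ}

lemma sum_lagrangeWeight_mul_pow (ha : a ≠ 0) (hb : b ≠ 0) (hab : a ^ 2 ≠ b ^ 2) (c : ℕ → ℝ)
    {n : ℕ} (hn : n ≤ 3) :
    lagrangeWeight a b c * a ^ n + lagrangeWeight (-a) b c * (-a) ^ n +
      (lagrangeWeight b a c * b ^ n + lagrangeWeight (-b) a c * (-b) ^ n) = c n := by
  have hba : b ^ 2 - a ^ 2 ≠ 0 := sub_ne_zero.2 hab.symm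
  have hflip : a ^ 2 - b ^ 2 = -(b ^ 2 - a ^ 2) := by ring
  simp only [lagrangeWeight, neg_sq, hflip]
  interval_cases n <;> field_simp <;> ring

lemma isTruncatedMomentArray_of_lagrangeWeight {M : ℕ} {s : ℕ → ℕ → ℝ}
    (ha : a ≠ 0) (hb : b ≠ 0) (hab : a ^ 2 ≠ b ^ 2)
    (hposa : IsTruncatedMomentSequence M fun m => lagrangeWeight a b (s m))
    (hnega : IsTruncatedMomentSequence M fun m => lagrangeWeight (-a) b (s m))
    (hposb : IsTruncatedMomentSequence M fun m => lagrangeWeight b a (s m))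
    (hnegb : IsTruncatedMomentSequence M fun m => lagrangeWeight (-b) a (s m)) :
    IsTruncatedMomentArray M 3 s :=
  (((hposa.mul_pow 3 a).add (hnega.mul_pow 3 (-a))).add
    ((hposb.mul_pow 3 b).add (hnegb.mul_pow 3 (-b)))).congr
    fun m _ _ hn => sum_lagrangeWeight_mul_pow ha hb hab (s m) hn

lemma tendsto_lagrangeWeight_cobounded (ha : a ≠ 0) (c : ℕ → ℝ) :
    Tendsto (fun b => lagrangeWeight a b c) (cobounded ℝ)
      (𝓝 ((2 * a)⁻¹ * (a * c 0 + c 1))) := by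
  -- The weight in terms of `ε = b⁻¹`.
  have hcont : ContinuousAt (fun ε : ℝ =>
      (a * c 0 + c 1 - ε ^ 2 * (a * c 2 + c 3)) / (2 * a * (1 - ε ^ 2 * a ^ 2))) 0 :=
    .div (by fun_prop) (by fun_prop) (by simpa using ha)
  have hlim := hcont.tendsto.comp tendsto_inv₀_cobounded
  convert hlim.congr' ?_ using 2
  · simp [div_eq_inv_mul]
  filter_upwards [eventually_ne_cobounded (0 : ℝ)] with b hb
  rw [Function.comp_apply, lagrangeWeight, ← mul_div_mul_left _ _ (pow_ne_zero 2 hb)]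
  congr 1 <;> field_simp

lemma tendsto_sq_mul_lagrangeWeight_cobounded (a : ℝ) (c : ℕ → ℝ) :
    Tendsto (fun b => b ^ 2 * lagrangeWeight b a c) (cobounded ℝ)
      (𝓝 (2⁻¹ * (c 2 - a ^ 2 * c 0))) := by
  have hcont : ContinuousAt (fun ε : ℝ =>
      (c 2 - a ^ 2 * c 0 + ε * (c 3 - a ^ 2 * c 1)) / (2 * (1 - ε ^ 2 * a ^ 2))) 0 :=
    .div (by fun_prop) (by fun_prop) (by simp)
  have hlim := hcont.tendsto.comp tendsto_inv₀_cobounded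
  convert hlim.congr' ?_ using 2
  · simp [div_eq_inv_mul]
  filter_upwards [eventually_ne_cobounded (0 : ℝ)] with b hb
  rw [Function.comp_apply, lagrangeWeight, ← mul_div_assoc,
    ← mul_div_mul_left _ _ (neg_ne_zero.2 (pow_ne_zero 3 hb))]
  congr 1 <;> field_simp <;> ring

end Interpolation

theorem isTruncatedMomentArray_of_hankelPosDef {s : ℕ → ℕ → ℝ} {a : ℝ} (ha : 0 < a)
    (hadd : HankelPosDef fun m => a * s m 0 + s m 1)
    (hsub : HankelPosDef fun m => a * s m 0 - s m 1)
    (htop : HankelPosDef fun m => s m 2 - a ^ 2 * s m 0) :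
    IsTruncatedMomentArray 3 3 s := by
  have hposa : ∀ᶠ b in cobounded ℝ, HankelPosDef fun m => lagrangeWeight a b (s m) :=
    ((hankelPosDef_const_mul_iff (by positivity)).2 hadd).eventually
      fun m => tendsto_lagrangeWeight_cobounded ha.ne' (s m)
  have hnega : ∀ᶠ b in cobounded ℝ, HankelPosDef fun m => lagrangeWeight (-a) b (s m) := by
    refine ((hankelPosDef_const_mul_iff (k := (2 * a)⁻¹) (by positivity)).2 hsub).eventually
      fun m => ?_
    convert tendsto_lagrangeWeight_cobounded (neg_ne_zero.2 ha.ne') (s m) using 2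
    ring
  have hposb : ∀ᶠ b in cobounded ℝ, HankelPosDef fun m => b ^ 2 * lagrangeWeight b a (s m) :=
    ((hankelPosDef_const_mul_iff (by positivity)).2 htop).eventually
      fun m => tendsto_sq_mul_lagrangeWeight_cobounded a (s m)
  have hnegb := tendsto_neg_cobounded.eventually hposb
  have hlarge : ∀ᶠ b : ℝ in cobounded ℝ, a < |b| :=
    tendsto_norm_cobounded_atTop.eventually_gt_atTop a
  obtain ⟨b, hposa, hnega, hposb, hnegb, hlarge⟩ :=
    (hposa.and (hnega.and (hposb.and (hnegb.and hlarge)))).exists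
  have hb : b ≠ 0 := abs_pos.1 (ha.trans hlarge)
  have hab : a ^ 2 ≠ b ^ 2 := (sq_lt_sq.2 (by rwa [abs_of_pos ha])).ne
  rw [hankelPosDef_const_mul_iff (sq_pos_of_ne_zero hb)] at hposb
  rw [hankelPosDef_const_mul_iff (sq_pos_of_ne_zero (neg_ne_zero.2 hb))] at hnegb
  exact isTruncatedMomentArray_of_lagrangeWeight ha.ne' hb hab hposa.isTruncatedMomentSequence
    hnega.isTruncatedMomentSequence hposb.isTruncatedMomentSequence
    hnegb.isTruncatedMomentSequence

/-- Theorem 3.1: sufficient conditions for the solvability of the truncated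
two-dimensional moment problem with `M = N = 3`. If `s_{0,0} > 0`,
`s_{0,0} s_{0,2} - s_{0,1}² > 0`, `s_{0,0} s_{2,0} - s_{1,0}² > 0`, and the intersection
`(|s_{0,1}|/s_{0,0}, √(s_{0,2}/s_{0,0})) ∩ I_1 ∩ I_2 ∩ I_3` is nonempty, then the moment
problem has a solution. -/
theorem truncated_moment_problem_M3_N3_solvable (s : ℕ → ℕ → ℝ)
    (h1 : 0 < s 0 0) (h2 : 0 < s 0 0 * s 0 2 - s 0 1 ^ 2)
    (h3 : 0 < s 0 0 * s 2 0 - s 1 0 ^ 2)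
    (hex : (Set.Ioo (|s 0 1| / s 0 0) (Real.sqrt (s 0 2 / s 0 0)) ∩
      {a2 : ℝ | 0 < a2 ∧
        (-a2 ^ 2 * s 1 0 + s 1 2) ^ 2 <
          (-a2 ^ 2 * s 0 0 + s 0 2) * (-a2 ^ 2 * s 2 0 + s 2 2)} ∩
      {a2 : ℝ | 0 < a2 ∧
        (a2 * s 1 0 - s 1 1) ^ 2 < (a2 * s 0 0 - s 0 1) * (a2 * s 2 0 - s 2 1)} ∩
      {a2 : ℝ | 0 < a2 ∧
        (a2 * s 1 0 + s 1 1) ^ 2 < (a2 * s 0 0 + s 0 1) * (a2 * s 2 0 + s 2 1)}).Nonempty) :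
    ∃ μ : Measure (ℝ × ℝ), ∀ m ≤ 3, ∀ n ≤ 3,
      Integrable (fun p : ℝ × ℝ => p.1 ^ m * p.2 ^ n) μ ∧
      ∫ p : ℝ × ℝ, p.1 ^ m * p.2 ^ n ∂μ = s m n := by
  obtain ⟨a, ⟨⟨⟨hlo, hhi⟩, ha, htop⟩, -, hsub⟩, -, hadd⟩ := hex
  rw [div_lt_iff₀ h1, abs_lt] at hlo
  rw [Real.lt_sqrt ha.le, lt_div_iff₀ h1] at hhi
  refine isTruncatedMomentArray_of_hankelPosDef ha ⟨by linarith, hadd⟩ ⟨by linarith, hsub⟩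
    ⟨by linarith, ?_⟩
  convert htop using 1 <;> ring
end

section
/- Let s_{0,0}, s_{0,1}, s_{0,2}, s_{0,3} be real numbers with s_{0,0} > 0 and s_{0,0} s_{0,2} − s_{0,1}² > 0, and let a_2 be a real number with |s_{0,1}|/s_{0,0} < a_2 < √(s_{0,2}/s_{0,0}). If a_3 is a real number satisfying a_3 > |a_2² s_{0,1} − s_{0,3}|/(−a_2² s_{0,0} + s_{0,2}) and a_3 > √((|s_{0,3}| + a_2 s_{0,2})/(a_2 s_{0,0} − |s_{0,1}|)), then both inequalities |a_2² s_{0,1} − s_{0,3}| < a_3(−a_2² s_{0,0} + s_{0,2}) and |a_3² s_{0,1} − s_{0,3}| < a_2(a_3² s_{0,0} − s_{0,2}) hold. -/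
/-!
The first inequality is the first lower bound on `a3` with its denominator cleared. For the second,
`|a3 ^ 2 * s01 - s03| ≤ a3 ^ 2 * |s01| + |s03|` replaces the claim by a condition that is linear in
`a3 ^ 2`, and the square-root bound is exactly the threshold beyond which that condition holds.
-/

lemma lt_sqrt_div_iff_sq_mul_lt {x b c : ℝ} (hx : 0 ≤ x) (hb : 0 < b) :
    x < Real.sqrt (c / b) ↔ x ^ 2 * b < c := by
  rw [Real.lt_sqrt hx, lt_div_iff₀ hb]

lemma sqrt_div_lt_iff_lt_sq_mul {x b c : ℝ} (hx : 0 < x) (hb : 0 < b) :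
    Real.sqrt (c / b) < x ↔ c < x ^ 2 * b := by
  rw [Real.sqrt_lt' hx, div_lt_iff₀ hb]

lemma abs_mul_sub_lt_mul_sub_of_abs_add_lt {R : Type*} [CommRing R] [LinearOrder R]
    [IsOrderedRing R] {t a b c d s : R} (ht : 0 ≤ t)
    (h : |d| + a * c < t * (a * b - |s|)) :
    |t * s - d| < a * (t * b - c) :=
  calc
    |t * s - d| ≤ |t * s| + |d| := abs_sub _ _
    _ = t * |s| + |d| := by rw [abs_mul, abs_of_nonneg ht]
    _ < a * (t * b - c) := by linear_combination h

/-- If `a_3` satisfies the lower bounds (3.49) and (3.50), then the two inequalities of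
the system (3.45) hold. -/
theorem lower_bounds_imply_abs_inequalities
    (s00 s01 s02 s03 : ℝ) (h0 : 0 < s00) (hdet : 0 < s00 * s02 - s01 ^ 2)
    (a2 : ℝ) (ha2l : |s01| / s00 < a2) (ha2u : a2 < Real.sqrt (s02 / s00))
    (a3 : ℝ)
    (ha3a : |a2 ^ 2 * s01 - s03| / (-a2 ^ 2 * s00 + s02) < a3)
    (ha3b : Real.sqrt ((|s03| + a2 * s02) / (a2 * s00 - |s01|)) < a3) :
    |a2 ^ 2 * s01 - s03| < a3 * (-a2 ^ 2 * s00 + s02) ∧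
    |a3 ^ 2 * s01 - s03| < a2 * (a3 ^ 2 * s00 - s02) := by
  have a2_pos : 0 < a2 := (div_nonneg (abs_nonneg s01) h0.le).trans_lt ha2l
  have a3_pos : 0 < a3 := (Real.sqrt_nonneg _).trans_lt ha3b
  have first_denom_pos : 0 < -a2 ^ 2 * s00 + s02 := by
    linarith [(lt_sqrt_div_iff_sq_mul_lt a2_pos.le h0).1 ha2u]
  have second_denom_pos : 0 < a2 * s00 - |s01| := sub_pos.2 ((div_lt_iff₀ h0).1 ha2l)
  constructor
  · exact (div_lt_iff₀ first_denom_pos).1 ha3a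
  · exact abs_mul_sub_lt_mul_sub_of_abs_add_lt (sq_nonneg a3)
      ((sqrt_div_lt_iff_lt_sq_mul a3_pos second_denom_pos).1 ha3b)
end
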